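/- Let φ: A → B be a flat, essentially of finite type homomorphism of commutative noetherian rings, and regard B as a module over the ring B ⊗_A B via the multiplication map B ⊗_A B → B. If B has finite projective dimension as a B ⊗_A B-module, then the Hochschild homology and cohomology of B over A vanish above the Krull dimension of B ⊗_A B: Tor_i^{B ⊗_A B}(B, B) = 0 and Ext^i_{B ⊗_A B}(B, B) = 0 for all i > dim(B ⊗_A B). -/

import Mathlib

/-!
STATEMENT 16: Let φ : A → B be a flat, essentially of finite type homomorphism of
commutative noetherian rings, and regard B as a module over B ⊗_A B via the
multiplication map.  If B has finite projective dimension as a B ⊗_A B-module, then the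
Hochschild homology and cohomology of B over A vanish above the Krull dimension of
B ⊗_A B: Tor_i^{B ⊗_A B}(B, B) = 0 and Ext^i_{B ⊗_A B}(B, B) = 0 for all
i > dim(B ⊗_A B).
-/

open CategoryTheory

universe u

/-- `Ext_A^i(M, N)` as an `A`-module. -/
noncomputable abbrev extGroup (A : Type u) [CommRing A] (M N : ModuleCat.{u} A) (i : ℕ) :
    ModuleCat A :=
  ((Ext A (ModuleCat.{u} A) i).obj (Opposite.op M)).obj N

/-- The projective dimension of an `A`-module `M`, defined as the least `n : ℕ∞` such that
`Ext_A^i(M, N) = 0` for every `A`-module `N` and every `i > n` (and `∞` if no such `n` exists). -/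
noncomputable def projDim (A : Type u) [CommRing A] (M : ModuleCat.{u} A) : ℕ∞ :=
  sInf {n : ℕ∞ | ∀ (N : ModuleCat.{u} A) (i : ℕ), n < (i : ℕ∞) →
    Subsingleton (extGroup A M N i)}

/-- `Tor^A_i(N, M)` as an `A`-module. -/
noncomputable abbrev torGroup (A : Type u) [CommRing A] (N M : ModuleCat.{u} A) (i : ℕ) :
    ModuleCat A :=
  ((Tor (ModuleCat.{u} A) i).obj N).obj M

/-- The flat dimension of an `A`-module `M`, defined as the least `n : ℕ∞` such that
`Tor^A_i(N, M) = 0` for every `A`-module `N` and every `i > n` (and `∞` if no such `n` exists). -/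
noncomputable def flatDim (A : Type u) [CommRing A] (M : ModuleCat.{u} A) : ℕ∞ :=
  sInf {n : ℕ∞ | ∀ (N : ModuleCat.{u} A) (i : ℕ), n < (i : ℕ∞) →
    Subsingleton (torGroup A N M i)}

open scoped TensorProduct

/-- `B` as a module over `B ⊗[A] B`, via the multiplication map `B ⊗[A] B → B`. -/
noncomputable def mulModule (A : Type u) [CommRing A] (B : Type u) [CommRing B]
    [Algebra A B] : Module (B ⊗[A] B) B :=
  Module.compHom B (Algebra.TensorProduct.lmul' A (S := B)).toRingHom

/-!
A finitely generated module of finite projective dimension over a noetherian ring `R` has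
projective dimension at most `dim R`, and a projective resolution of a module of projective
dimension `< i` is contractible around degree `i`, so that every additive functor keeps it exact
there. Apply this to `B` over `B ⊗[A] B`.

The bound on the projective dimension is local, so let `R` be local with residue field `k`. If the
maximal ideal contains a nonzerodivisor `x`, then `x` is also regular on the first syzygy `K` of the
module, `K ⧸ x K` has the same projective dimension over `R ⧸ (x)` as `K` over `R`, and
`dim R ⧸ (x) = dim R - 1`: induct on the dimension. Otherwise `k` embeds into `R`. Then an injection
`K → F` of a flat module into a free one remains injective after tensoring with `k`, because
`k ⊗ K` embeds into `K ⊆ F`; hence the cokernel is free, and descending along a resolution shows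
that finite projective dimension forces projectivity.
-/

open IsLocalRing Limits

section DerivedFunctors

variable {C : Type*} [Category* C] [Abelian C]

lemma exact_of_comp_add_comp_eq_id (S : ShortComplex C) (a : S.X₃ ⟶ S.X₂) (b : S.X₂ ⟶ S.X₁)
    (h : S.g ≫ a + b ≫ S.f = 𝟙 S.X₂) : S.Exact := by
  rw [S.exact_iff_kernel_ι_comp_cokernel_π_zero]
  calc kernel.ι S.g ≫ cokernel.π S.f
      = kernel.ι S.g ≫ (S.g ≫ a + b ≫ S.f) ≫ cokernel.π S.f := by rw [h, Category.id_comp]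
    _ = 0 := by simp

lemma exists_retraction_image_d {X : C} (P : ProjectiveResolution X) (n : ℕ)
    [HasProjectiveDimensionLT X (n + 1)] :
    ∃ ρ : P.complex.X n ⟶ image (P.complex.d (n + 1) n),
      image.ι (P.complex.d (n + 1) n) ≫ ρ = 𝟙 _ := by
  -- The corestriction of `d` to its image is a cocycle with class in the vanishing `Ext^(n+1)`.
  let := HasExt.standard C
  set d := P.complex.d (n + 1) n
  have cocycle : P.complex.d (n + 2) (n + 1) ≫ factorThruImage d = 0 := by
    simp [← cancel_mono (image.ι d), d]
  have : Subsingleton (Abelian.Ext X (image d) (n + 1)) :=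
    HasProjectiveDimensionLT.subsingleton X (n + 1) (n + 1) le_rfl _
  obtain ⟨ρ, hρ⟩ := (P.extMk_eq_zero_iff _ (n + 2) rfl cocycle n rfl).mp (Subsingleton.elim _ _)
  exact ⟨ρ, by simpa [← cancel_epi (factorThruImage d)] using hρ⟩

lemma exists_d_comp_add_comp_d_eq_id {X : C} (P : ProjectiveResolution X) (n : ℕ)
    [HasProjectiveDimensionLT X (n + 1)] :
    ∃ (a : P.complex.X n ⟶ P.complex.X (n + 1)) (b : P.complex.X (n + 1) ⟶ P.complex.X (n + 2)),
      P.complex.d (n + 1) n ≫ a + b ≫ P.complex.d (n + 2) (n + 1) = 𝟙 _ := by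
  let d := P.complex.d (n + 1) n
  obtain ⟨ρ, hρ : image.ι d ≫ ρ = 𝟙 _⟩ := exists_retraction_image_d P n
  have : Projective (image d) := (Retract.mk _ _ hρ).projective
  obtain ⟨σ, hσ⟩ := Projective.factors (𝟙 (image d)) (factorThruImage d)
  have dρ : d ≫ ρ = factorThruImage d := by
    rw [← Category.comp_id (factorThruImage d), ← hρ, image.fac_assoc]
  have σd : σ ≫ d = image.ι d := by simpa using hσ =≫ image.ι d
  have cycle : (𝟙 _ - d ≫ ρ ≫ σ) ≫ d = 0 := by
    simp [reassoc_of% dρ, σd]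
  have exact_succ := P.exact_succ n
  exact ⟨ρ ≫ σ, exact_succ.liftFromProjective _ cycle, by
    rw [show _ ≫ _ = _ from exact_succ.liftFromProjective_comp _ cycle, add_sub_cancel]⟩

variable [EnoughProjectives C]

lemma subsingleton_abelianExt_of_isZero_ext {R : Type*} [Ring R] [Linear R C] [HasExt C]
    {X Y : C} {n : ℕ} (h : IsZero (((Ext R C (n + 1)).obj (Opposite.op X)).obj Y)) :
    Subsingleton (Abelian.Ext X Y (n + 1)) := by
  let P := projectiveResolution X
  rw [(P.isoExt (R := R) (n + 1) Y).isZero_iff, ← HomologicalComplex.exactAt_iff_isZero_homology,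
    HomologicalComplex.exactAt_iff' _ n (n + 1) (n + 2) (by simp) (by simp),
    ShortComplex.moduleCat_exact_iff] at h
  refine subsingleton_of_forall_eq 0 fun α ↦ ?_
  obtain ⟨f, hf, rfl⟩ := P.extMk_surjective α (n + 2) rfl
  exact (P.extMk_eq_zero_iff f (n + 2) rfl hf n rfl).mpr (h f hf)

lemma isZero_leftDerived_obj_of_hasProjectiveDimensionLT {D : Type*} [Category* D] [Abelian D]
    (F : C ⥤ D) [F.Additive] (X : C) (n : ℕ) [HasProjectiveDimensionLT X n] :
    IsZero ((F.leftDerived n).obj X) := by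
  cases n with
  | zero =>
    have hX := isZero_of_hasProjectiveDimensionLT_zero X
    have := hX.projective
    refine IsZero.of_iso ?_ ((ProjectiveResolution.self X).isoLeftDerivedObj F 0)
    rw [HomologicalComplex.homologyFunctor_obj, ← HomologicalComplex.exactAt_iff_isZero_homology]
    exact ShortComplex.exact_of_isZero_X₂ _ (F.map_isZero hX)
  | succ n =>
    let P := projectiveResolution X
    obtain ⟨a, b, hab⟩ := exists_d_comp_add_comp_d_eq_id P n
    refine IsZero.of_iso ?_ (P.isoLeftDerivedObj F (n + 1))
    rw [HomologicalComplex.homologyFunctor_obj, ← HomologicalComplex.exactAt_iff_isZero_homology,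
      HomologicalComplex.exactAt_iff' _ (n + 2) (n + 1) n (by simp) (by simp)]
    have split := congrArg F.map hab
    rw [F.map_add, F.map_comp, F.map_comp, F.map_id] at split
    exact exact_of_comp_add_comp_eq_id _ (F.map a) (F.map b) split

lemma isZero_ext_of_hasProjectiveDimensionLT {R : Type*} [Ring R] [Linear R C]
    (X Y : C) (n : ℕ) [HasProjectiveDimensionLT X n] :
    IsZero (((Ext R C n).obj (Opposite.op X)).obj Y) :=
  (isZero_leftDerived_obj_of_hasProjectiveDimensionLT
    ((linearYoneda R C).obj Y).rightOp X n).unop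

lemma isZero_tor_of_hasProjectiveDimensionLT [MonoidalCategory C] [MonoidalPreadditive C]
    (X Y : C) (n : ℕ) [HasProjectiveDimensionLT Y n] :
    IsZero (((Tor C n).obj X).obj Y) :=
  isZero_leftDerived_obj_of_hasProjectiveDimensionLT _ Y n

end DerivedFunctors

section ProjDim

variable {R : Type u} [CommRing R] {M : ModuleCat.{u} R}

lemma projDim_le_natCast_iff {n : ℕ} : projDim R M ≤ n ↔ HasProjectiveDimensionLE M n := by
  let S := {n : ℕ∞ | ∀ (N : ModuleCat.{u} R) (i : ℕ), n < (i : ℕ∞) →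
    Subsingleton (extGroup R M N i)}
  constructor
  · intro h
    have attained : projDim R M ∈ S := csInf_mem ⟨⊤, by simp [S]⟩
    refine hasProjectiveDimensionLT_of_enoughInjectives M (n + 1) fun N ↦ ?_
    refine subsingleton_abelianExt_of_isZero_ext (R := R) ?_
    exact ModuleCat.isZero_iff_subsingleton.mpr
      (attained N (n + 1) (h.trans_lt (by exact_mod_cast n.lt_succ_self)))
  · intro h
    refine sInf_le fun N i hi ↦ ?_
    have : HasProjectiveDimensionLT M i :=
      hasProjectiveDimensionLT_of_ge M (n + 1) i (by exact_mod_cast hi)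
    exact ModuleCat.isZero_iff_subsingleton.mp (isZero_ext_of_hasProjectiveDimensionLT M N i)

lemma projectiveDimension_ne_top_iff_projDim_ne_top :
    projectiveDimension M ≠ ⊤ ↔ projDim R M ≠ ⊤ := by
  simp_rw [projectiveDimension_ne_top_iff, ← projDim_le_natCast_iff]
  exact ⟨fun ⟨n, hn⟩ ↦ (hn.trans_lt (ENat.natCast_lt_top n)).ne,
    fun h ↦ ⟨_, (ENat.natCast_toNat h).ge⟩⟩

end ProjDim

section LocalAlgebra

variable {R : Type u} [CommRing R]

lemma hasProjectiveDimensionLE_succ_iff_ker {F M : Type u} [AddCommGroup F] [AddCommGroup M]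
    [Module R F] [Module R M] [Module.Projective R F] {f : F →ₗ[R] M}
    (hf : Function.Surjective f) (n : ℕ) :
    HasProjectiveDimensionLE (ModuleCat.of R M) (n + 1) ↔
      HasProjectiveDimensionLE (ModuleCat.of R (LinearMap.ker f)) n :=
  (LinearMap.shortExact_shortComplexKer hf).hasProjectiveDimensionLT_X₃_iff n
    (ModuleCat.projective_of_categoryTheory_projective _)

lemma hasProjectiveDimensionLE_zero_iff_projective {M : Type u} [AddCommGroup M] [Module R M] :
    HasProjectiveDimensionLE (ModuleCat.of R M) 0 ↔ Module.Projective R M := by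
  rw [← projective_iff_hasProjectiveDimensionLE_zero, ← IsProjective.iff_projective]

variable [IsLocalRing R]

lemma exists_isSMulRegular_or_exists_residueField_injective [IsNoetherianRing R]
    (M : Type*) [AddCommGroup M] [Module R M] [Module.Finite R M] :
    (∃ x ∈ maximalIdeal R, IsSMulRegular M x) ∨
      ∃ φ : ResidueField R →ₗ[R] M, Function.Injective φ := by
  have : IsSimpleModule R (R ⧸ maximalIdeal R) :=
    isSimpleModule_iff_isCoatom.mpr (maximalIdeal.isMaximal R).out
  rcases subsingleton_or_nontrivial ((R ⧸ maximalIdeal R) →ₗ[R] M) with hom_zero | hom_ne_zero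
  · left
    simpa [Ideal.annihilator_quotient] using IsSMulRegular.subsingleton_linearMap_iff.mp hom_zero
  · right
    obtain ⟨φ, hφ⟩ := exists_ne (0 : (R ⧸ maximalIdeal R) →ₗ[R] M)
    exact ⟨φ, φ.injective_or_eq_zero.resolve_right hφ⟩

lemma free_of_exact_of_residueField_injective {φ : ResidueField R →ₗ[R] R}
    (hφ : Function.Injective φ) {K F M : Type*} [AddCommGroup K] [AddCommGroup F] [AddCommGroup M]
    [Module R K] [Module R F] [Module R M] [Module.Finite R K] [Module.Flat R K]
    [Module.Finite R F] [Module.Free R F] {f : K →ₗ[R] F} {g : F →ₗ[R] M}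
    (hf : Function.Injective f) (hfg : Function.Exact f g) (hg : Function.Surjective g) :
    Module.Free R M := by
  refine Module.free_of_lTensor_residueField_injective f g hg hfg ?_
  have square : φ.rTensor F ∘ₗ f.lTensor (ResidueField R) = f.lTensor R ∘ₗ φ.rTensor K := by
    rw [LinearMap.rTensor_comp_lTensor, LinearMap.lTensor_comp_rTensor]
  refine .of_comp (f := φ.rTensor F) ?_
  rw [← LinearMap.coe_comp, square, LinearMap.coe_comp]
  exact (Module.Flat.lTensor_preserves_injective_linearMap f hf).comp
    (Module.Flat.rTensor_preserves_injective_linearMap φ hφ)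

lemma projective_of_hasProjectiveDimensionLE_of_residueField_injective [IsNoetherianRing R]
    {φ : ResidueField R →ₗ[R] R} (hφ : Function.Injective φ) (n : ℕ)
    (M : Type u) [AddCommGroup M] [Module R M] [Module.Finite R M]
    (h : HasProjectiveDimensionLE (ModuleCat.of R M) n) : Module.Projective R M := by
  induction n generalizing M with
  | zero => exact hasProjectiveDimensionLE_zero_iff_projective.mp h
  | succ n ih =>
    obtain ⟨F, _, _, _, _, f, hf⟩ := Module.exists_finite_presentation R M
    have := ih (LinearMap.ker f) ((hasProjectiveDimensionLE_succ_iff_ker hf n).mp h)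
    have := free_of_exact_of_residueField_injective hφ (LinearMap.ker f).injective_subtype
      (LinearMap.exact_subtype_ker_map f) hf
    exact .of_free

end LocalAlgebra

section QuotSMulTop

variable {R : Type u} [CommRing R] {x : R}

lemma isSMulRegular_of_flat (hx : IsSMulRegular R x) (F : Type*) [AddCommGroup F] [Module R F]
    [Module.Flat R F] : IsSMulRegular F x :=
  Module.Flat.isSMulRegular_of_isRegular (isLeftRegular_iff_isRegular.mp (isLeftRegular_iff.mpr hx))

lemma quotSMulTop_map_injective {K F N : Type*} [AddCommGroup K] [AddCommGroup F] [AddCommGroup N]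
    [Module R K] [Module R F] [Module R N] {f : K →ₗ[R] F} {g : F →ₗ[R] N}
    (hf : Function.Injective f) (hfg : Function.Exact f g) (hN : IsSMulRegular N x) :
    Function.Injective (QuotSMulTop.map x f) := by
  have exact_zero : Function.Exact (0 : PUnit →ₗ[R] K) f :=
    (LinearMap.exact_zero_iff_injective _ _).mpr hf
  have := QuotSMulTop.map_first_exact_on_four_term_exact_of_isSMulRegular_last
    exact_zero hfg hN
  rwa [map_zero, LinearMap.exact_zero_iff_injective] at this

lemma hasProjectiveDimensionLE_succ_quotSMulTop_iff_ker {F N : Type u} [AddCommGroup F]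
    [AddCommGroup N] [Module R F] [Module R N] [Module.Free R F] {f : F →ₗ[R] N}
    (hf : Function.Surjective f) (hN : IsSMulRegular N x) (n : ℕ) :
    HasProjectiveDimensionLE (ModuleCat.of (R ⧸ Ideal.span {x}) (QuotSMulTop x N)) (n + 1) ↔
      HasProjectiveDimensionLE
        (ModuleCat.of (R ⧸ Ideal.span {x}) (QuotSMulTop x (LinearMap.ker f))) n := by
  let i : QuotSMulTop x (LinearMap.ker f) →ₗ[R ⧸ Ideal.span {x}] QuotSMulTop x F :=
    (QuotSMulTop.map x (LinearMap.ker f).subtype).extendScalarsOfSurjective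
      Ideal.Quotient.mk_surjective
  let p : QuotSMulTop x F →ₗ[R ⧸ Ideal.span {x}] QuotSMulTop x N :=
    (QuotSMulTop.map x f).extendScalarsOfSurjective Ideal.Quotient.mk_surjective
  have exact_ip : Function.Exact i p :=
    QuotSMulTop.map_exact x (LinearMap.exact_subtype_ker_map f) hf
  have inj : Function.Injective (QuotSMulTop.map x (LinearMap.ker f).subtype) :=
    quotSMulTop_map_injective (LinearMap.ker f).injective_subtype
      (LinearMap.exact_subtype_ker_map f) hN
  let T : ShortComplex (ModuleCat.{u} (R ⧸ Ideal.span {x})) :=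
    ModuleCat.shortComplexOfCompEqZero i p exact_ip.linearMap_comp_eq_zero
  have T_exact : T.ShortExact :=
    { exact := (ShortComplex.ShortExact.moduleCat_exact_iff_function_exact _).mpr exact_ip
      mono_f := (ModuleCat.mono_iff_injective _).mpr inj
      epi_g := (ModuleCat.epi_iff_surjective _).mpr (QuotSMulTop.map_surjective x hf) }
  have : Projective T.X₂ := by
    rw [← IsProjective.iff_projective]
    change Module.Projective (R ⧸ Ideal.span {x}) (QuotSMulTop x F)
    infer_instance
  exact T_exact.hasProjectiveDimensionLT_X₃_iff n this

variable [IsLocalRing R]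

lemma isLocalRing_quotient_span_singleton (hx : x ∈ maximalIdeal R) :
    IsLocalRing (R ⧸ Ideal.span {x}) := by
  have : Nontrivial (R ⧸ Ideal.span {x}) := by
    rwa [Ideal.Quotient.nontrivial_iff, Ne, Ideal.span_singleton_eq_top]
  exact .of_surjective' _ Ideal.Quotient.mk_surjective

variable [IsNoetherianRing R]

lemma projective_quotSMulTop_iff (hx : x ∈ maximalIdeal R) {N : Type*} [AddCommGroup N]
    [Module R N] [Module.Finite R N] (hN : IsSMulRegular N x) :
    Module.Projective (R ⧸ Ideal.span {x}) (QuotSMulTop x N) ↔ Module.Projective R N := by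
  have := isLocalRing_quotient_span_singleton hx
  have := Module.Finite.of_restrictScalars_finite R (R ⧸ Ideal.span {x}) (QuotSMulTop x N)
  have := Module.finitePresentation_of_finite R N
  have free_iff := Module.free_quotSMulTop_iff_free R N
    (by rwa [IsLocalRing.jacobson_eq_maximalIdeal ⊥ bot_ne_top]) hN
  refine ⟨fun _ ↦ ?_, fun _ ↦ ?_⟩
  · have := free_iff.mp Module.free_of_flat_of_isLocalRing
    exact .of_free
  · have := free_iff.mpr Module.free_of_flat_of_isLocalRing
    exact .of_free

lemma hasProjectiveDimensionLE_quotSMulTop_iff (hx : x ∈ maximalIdeal R) (hR : IsSMulRegular R x)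
    {N : Type u} [AddCommGroup N] [Module R N] [Module.Finite R N] (hN : IsSMulRegular N x)
    (n : ℕ) :
    HasProjectiveDimensionLE (ModuleCat.of (R ⧸ Ideal.span {x}) (QuotSMulTop x N)) n ↔
      HasProjectiveDimensionLE (ModuleCat.of R N) n := by
  induction n generalizing N with
  | zero => simpa only [hasProjectiveDimensionLE_zero_iff_projective] using
      projective_quotSMulTop_iff hx hN
  | succ n ih =>
    obtain ⟨F, _, _, _, _, f, hf⟩ := Module.exists_finite_presentation R N
    rw [hasProjectiveDimensionLE_succ_quotSMulTop_iff_ker hf hN,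
      hasProjectiveDimensionLE_succ_iff_ker hf]
    exact ih ((isSMulRegular_of_flat hR F).submodule _ x)

lemma exists_ringKrullDim_eq_natCast (R : Type*) [CommRing R] [FiniteRingKrullDim R] :
    ∃ d : ℕ, ringKrullDim R = d := by
  obtain ⟨d, hd⟩ := WithBot.ne_bot_iff_exists.mp (ringKrullDim_ne_bot (R := R))
  have : d ≠ ⊤ := fun h ↦ ringKrullDim_ne_top (R := R) (by rw [← hd, h]; rfl)
  exact ⟨d.toNat, by rw [← hd, ← ENat.natCast_toNat this]; rfl⟩

lemma exists_eq_add_one_and_ringKrullDim_quotient_le {d : ℕ} (hd : ringKrullDim R ≤ d)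
    (hx : x ∈ maximalIdeal R) (hR : IsSMulRegular R x) :
    ∃ e : ℕ, d = e + 1 ∧ ringKrullDim (R ⧸ Ideal.span {x}) ≤ e := by
  have := isLocalRing_quotient_span_singleton hx
  have dim_add_one := ringKrullDim_quotient_span_singleton_succ_eq_ringKrullDim hR hx
  obtain ⟨e, he⟩ := exists_ringKrullDim_eq_natCast (R ⧸ Ideal.span {x})
  rw [he] at dim_add_one ⊢
  rw [← dim_add_one] at hd
  norm_cast at hd
  exact ⟨d - 1, by omega, by norm_cast; omega⟩

end QuotSMulTop

lemma hasProjectiveDimensionLE_of_ringKrullDim_le {R : Type u} [CommRing R] [IsLocalRing R]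
    [IsNoetherianRing R] {d n : ℕ} (hd : ringKrullDim R ≤ d)
    {M : Type u} [AddCommGroup M] [Module R M] [Module.Finite R M]
    (h : HasProjectiveDimensionLE (ModuleCat.of R M) n) :
    HasProjectiveDimensionLE (ModuleCat.of R M) d := by
  induction d using Nat.strong_induction_on generalizing R M n with
  | h d ih =>
    rcases exists_isSMulRegular_or_exists_residueField_injective (R := R) R with
      ⟨x, hx, hR⟩ | ⟨φ, hφ⟩
    · obtain ⟨e, rfl, he⟩ := exists_eq_add_one_and_ringKrullDim_quotient_le hd hx hR
      have := isLocalRing_quotient_span_singleton hx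
      obtain ⟨F, _, _, _, _, f, hf⟩ := Module.exists_finite_presentation R M
      let K := LinearMap.ker f
      have hK : IsSMulRegular K x := (isSMulRegular_of_flat hR F).submodule _ x
      have := Module.Finite.of_restrictScalars_finite R (R ⧸ Ideal.span {x}) (QuotSMulTop x K)
      have pd_K : HasProjectiveDimensionLE (ModuleCat.of R K) n :=
        (hasProjectiveDimensionLE_succ_iff_ker hf n).mp
          (hasProjectiveDimensionLT_of_ge _ (n + 1) _ (by omega))
      rw [hasProjectiveDimensionLE_succ_iff_ker hf,
        ← hasProjectiveDimensionLE_quotSMulTop_iff hx hR hK]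
      exact ih e e.lt_succ_self he
        ((hasProjectiveDimensionLE_quotSMulTop_iff hx hR hK n).mpr pd_K)
    · have := hasProjectiveDimensionLE_zero_iff_projective.mpr <|
        projective_of_hasProjectiveDimensionLE_of_residueField_injective hφ n M h
      exact hasProjectiveDimensionLT_of_ge _ (0 + 1) _ (by omega)

lemma projectiveDimension_le_ringKrullDim_of_isLocalRing {R : Type u} [CommRing R] [IsLocalRing R]
    [IsNoetherianRing R] (M : ModuleCat.{u} R) [Module.Finite R M]
    (h : projectiveDimension M ≠ ⊤) : projectiveDimension M ≤ ringKrullDim R := by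
  obtain ⟨n, hn⟩ := (projectiveDimension_ne_top_iff M).mp h
  obtain ⟨d, hd⟩ := exists_ringKrullDim_eq_natCast R
  rw [hd, projectiveDimension_le_iff]
  exact hasProjectiveDimensionLE_of_ringKrullDim_le hd.le hn

theorem projectiveDimension_le_ringKrullDim {R : Type u} [CommRing R] [IsNoetherianRing R]
    (M : ModuleCat.{u} R) [Module.Finite R M] (h : projectiveDimension M ≠ ⊤) :
    projectiveDimension M ≤ ringKrullDim R := by
  rw [M.projectiveDimension_eq_iSup_localizedModule_maximal]
  refine iSup_le fun m ↦ ?_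
  let Rₘ := Localization m.1.primeCompl
  have : IsLocalRing Rₘ := inferInstanceAs (IsLocalRing (Localization.AtPrime m.1))
  have : IsNoetherianRing Rₘ := IsLocalization.isNoetherianRing m.1.primeCompl _ ‹_›
  have : Module.Finite Rₘ (M.localizedModule m.1.primeCompl) :=
    .of_isLocalizedModule m.1.primeCompl (M.localizedModuleMkLinearMap m.1.primeCompl)
  have pd_le := M.projectiveDimension_le_projectiveDimension_of_isLocalizedModule m.1.primeCompl
  calc projectiveDimension (M.localizedModule m.1.primeCompl)
      ≤ ringKrullDim Rₘ :=
        projectiveDimension_le_ringKrullDim_of_isLocalRing _ (ne_top_of_le_ne_top h pd_le)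
    _ = m.1.height := IsLocalization.AtPrime.ringKrullDim_eq_height m.1 _
    _ ≤ ringKrullDim R := Ideal.height_le_ringKrullDim_of_ne_top m.2.ne_top

theorem subsingleton_tor_and_ext_of_ringKrullDim_lt {R : Type u} [CommRing R] [IsNoetherianRing R]
    (M : ModuleCat.{u} R) [Module.Finite R M] (h : projDim R M ≠ ⊤) (N : ModuleCat.{u} R) {i : ℕ}
    (hi : ringKrullDim R < i) :
    Subsingleton (torGroup R N M i) ∧ Subsingleton (extGroup R M N i) := by
  have : HasProjectiveDimensionLT M i := projectiveDimension_lt_iff.mp <|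
    (projectiveDimension_le_ringKrullDim M
      (projectiveDimension_ne_top_iff_projDim_ne_top.mpr h)).trans_lt hi
  exact ⟨ModuleCat.isZero_iff_subsingleton.mp (isZero_tor_of_hasProjectiveDimensionLT N M i),
    ModuleCat.isZero_iff_subsingleton.mp (isZero_ext_of_hasProjectiveDimensionLT M N i)⟩

lemma finite_mulModule (A B : Type u) [CommRing A] [CommRing B] [Algebra A B] :
    letI := mulModule A B
    Module.Finite (B ⊗[A] B) B := by
  let := mulModule A B
  refine .of_surjective (LinearMap.toSpanSingleton (B ⊗[A] B) B 1) fun b ↦ ⟨b ⊗ₜ 1, ?_⟩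
  change Algebra.TensorProduct.lmul' A (S := B) (b ⊗ₜ[A] 1) * 1 = b
  simp

theorem hochschild_homology_cohomology_vanishing_general
    (A : Type u) [CommRing A] (B : Type u) [CommRing B] [Algebra A B]
    [IsNoetherianRing (B ⊗[A] B)] :
    letI := mulModule A B
    projDim (B ⊗[A] B) (ModuleCat.of (B ⊗[A] B) B) ≠ ⊤ →
      ∀ (N : ModuleCat.{u} (B ⊗[A] B)) (i : ℕ), ringKrullDim (B ⊗[A] B) < (i : WithBot ℕ∞) →
        Subsingleton (torGroup (B ⊗[A] B) N (ModuleCat.of (B ⊗[A] B) B) i) ∧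
        Subsingleton (extGroup (B ⊗[A] B) (ModuleCat.of (B ⊗[A] B) B) N i) := by
  let := mulModule A B
  have := finite_mulModule A B
  exact fun h N _ hi ↦ subsingleton_tor_and_ext_of_ringKrullDim_lt _ h N hi

theorem hochschild_homology_cohomology_vanishing
    (A : Type u) [CommRing A] (B : Type u) [CommRing B] [Algebra A B]
    [IsNoetherianRing A] [IsNoetherianRing B]
    [Module.Flat A B] [Algebra.EssFiniteType A B] :
    letI := mulModule A B
    projDim (B ⊗[A] B) (ModuleCat.of (B ⊗[A] B) B) ≠ ⊤ →
      ∀ i : ℕ, ringKrullDim (B ⊗[A] B) < (i : WithBot ℕ∞) →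
        Subsingleton (torGroup (B ⊗[A] B) (ModuleCat.of (B ⊗[A] B) B)
            (ModuleCat.of (B ⊗[A] B) B) i) ∧
        Subsingleton (extGroup (B ⊗[A] B) (ModuleCat.of (B ⊗[A] B) B)
            (ModuleCat.of (B ⊗[A] B) B) i) := by
  have := Algebra.EssFiniteType.isNoetherianRing B (B ⊗[A] B)
  exact fun h ↦ hochschild_homology_cohomology_vanishing_general A B h _
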